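/- Let g > 0 and let h₀ > 0, c₀, w₀ be constants. On the set of times t with c₀ + w₀ t > 0, define h(t) = h₀/(c₀ + w₀ t)² and u(t,r) = w₀ r/(c₀ + w₀ t). Then (h,u) is an exact solution of the radially symmetric Serre–Green–Naghdi equations: (r h)_t + (r h u)_r = 0 and h(u_t + u u_r) + p_r = 0, where p = g h²/2 + (h²/3) ḧ with ḣ = h_t + u h_r and ḧ = (ḣ)_t + u (ḣ)_r; moreover p is independent of r, so p_r = 0. -/

import Mathlib

noncomputable section

/-- Partial derivative in the time variable of a function of `(t, r)`. -/
def pT2 (f : ℝ → ℝ → ℝ) : ℝ → ℝ → ℝ := fun t r => deriv (fun s => f s r) t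

/-- Partial derivative in the radial variable of a function of `(t, r)`. -/
def pR2 (f : ℝ → ℝ → ℝ) : ℝ → ℝ → ℝ := fun t r => deriv (fun s => f t s) r

open Filter Topology

/-!
The flow is a uniform dilation `u = a(t) r` of a layer of spatially uniform depth `η(t)`. The
material derivative of a function of time alone is again a function of time alone, so `ḣ`, `ḧ` and
every pressure built from them are constant in `r`. What is left of the mass and momentum equations
is `η' + 2aη = 0` and `a' + a² = 0`, which `η = h₀/τ²` and `a = τ'/τ` solve when `τ` is affine.
-/

/-- The material derivative `fₜ + u fᵣ` of a field `f(t, r)` along the radial velocity `u(t, r)`,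
written with a dot in the Serre–Green–Naghdi equations. -/
def materialDeriv (u f : ℝ → ℝ → ℝ) : ℝ → ℝ → ℝ := fun t r => pT2 f t r + u t r * pR2 f t r

section UniformDilation

variable (η a f : ℝ → ℝ) (t r : ℝ)

lemma pR2_of_time_only : pR2 (fun t _ => f t) t r = 0 :=
  deriv_const r (f t)

lemma materialDeriv_of_time_only (u : ℝ → ℝ → ℝ) :
    materialDeriv u (fun t _ => f t) = fun t _ => deriv f t := by
  funext t r
  simp only [materialDeriv, pT2, pR2_of_time_only, mul_zero, add_zero]

lemma radial_mass_balance_of_dilation :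
    pT2 (fun t r => r * η t) t r + pR2 (fun t r => r * η t * (a t * r)) t r =
      r * (deriv η t + 2 * a t * η t) := by
  have h_time : pT2 (fun t r => r * η t) t r = r * deriv η t :=
    deriv_const_mul_field r
  have h_flux : pR2 (fun t r => r * η t * (a t * r)) t r = 2 * r * a t * η t := by
    refine ((((hasDerivAt_id' r).mul_const (η t)).fun_mul
      ((hasDerivAt_id' r).const_mul (a t))).congr_deriv ?_).deriv
    ring
  rw [h_time, h_flux]
  ring

lemma materialDeriv_dilation_self :
    materialDeriv (fun t r => a t * r) (fun t r => a t * r) t r = (deriv a t + a t ^ 2) * r := by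
  have h_time : pT2 (fun t r => a t * r) t r = deriv a t * r :=
    deriv_mul_const_field r
  have h_radial : pR2 (fun t r => a t * r) t r = a t :=
    (hasDerivAt_const_mul (a t)).deriv
  rw [materialDeriv, h_time, h_radial]
  ring

end UniformDilation

section DilationODE

variable {𝕜 : Type*} [NontriviallyNormedField 𝕜] {τ : 𝕜 → 𝕜} {τ' t : 𝕜}

lemma hasDerivAt_const_div_sq (k : 𝕜) (hτ : HasDerivAt τ τ' t) (hne : τ t ≠ 0) :
    HasDerivAt (fun s => k / τ s ^ 2) (-2 * (τ' / τ t) * (k / τ t ^ 2)) t := by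
  refine ((hasDerivAt_const t k).fun_div (hτ.fun_pow 2) (pow_ne_zero 2 hne)).congr_deriv ?_
  field_simp
  ring

lemma hasDerivAt_slope_div (hτ : HasDerivAt τ τ' t) (hne : τ t ≠ 0) :
    HasDerivAt (fun s => τ' / τ s) (-(τ' / τ t) ^ 2) t := by
  refine ((hasDerivAt_const t τ').fun_div hτ hne).congr_deriv ?_
  field_simp
  ring

end DilationODE

-- `hddot` evaluates to `deriv (deriv η) t`, which is a genuine second derivative only where `η` is
-- differentiable on a neighbourhood of `t`.
theorem sgn_radial_exact_solution_general
    {η a : ℝ → ℝ} (P : ℝ → ℝ → ℝ → ℝ)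
    {h u : ℝ → ℝ → ℝ}
    (h_def : h = fun t _ => η t)
    (u_def : u = fun t r => a t * r)
    {hdot : ℝ → ℝ → ℝ}
    (hdot_def : hdot = materialDeriv u h)
    {hddot : ℝ → ℝ → ℝ}
    (hddot_def : hddot = materialDeriv u hdot)
    {p : ℝ → ℝ → ℝ}
    (p_def : p = fun t r => P (h t r) (hdot t r) (hddot t r))
    {t : ℝ}
    (hη : ∀ᶠ s in 𝓝 t, HasDerivAt η (-2 * a s * η s) s)
    (ha : ∀ᶠ s in 𝓝 t, HasDerivAt a (-a s ^ 2) s)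
    (r : ℝ) :
    (pT2 (fun t r => r * h t r) t r + pR2 (fun t r => r * h t r * u t r) t r = 0) ∧
    (h t r * materialDeriv u u t r + pR2 p t r = 0) ∧
    pR2 p t r = 0 := by
  have hp : pR2 p t r = 0 := by
    rw [h_def, materialDeriv_of_time_only] at hdot_def
    rw [hdot_def, materialDeriv_of_time_only] at hddot_def
    rw [p_def, h_def, hdot_def, hddot_def]
    exact pR2_of_time_only (fun t => P (η t) (deriv η t) (deriv (deriv η) t)) t r
  subst h_def u_def
  refine ⟨?_, ?_, hp⟩
  · rw [radial_mass_balance_of_dilation, hη.self_of_nhds.deriv]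
    ring
  · rw [hp, materialDeriv_dilation_self, ha.self_of_nhds.deriv]
    ring

/-- For constants `h₀ > 0`, `c₀`, `w₀`, the fields `h(t) = h₀/(c₀ + w₀t)²` and
`u(t,r) = w₀r/(c₀ + w₀t)` form, on the set of times with `c₀ + w₀t > 0`, an exact
solution of the radially symmetric Serre–Green–Naghdi equations
`(rh)ₜ + (rhu)ᵣ = 0` and `h(uₜ + uuᵣ) + pᵣ = 0` with `p = gh²/2 + (h²/3)ḧ`;
moreover `p` is independent of `r`, i.e. `pᵣ = 0`. -/
theorem sgn_radial_exact_solution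
    (g h0 c0 w0 : ℝ) (hg : 0 < g) (h0_pos : 0 < h0)
    (h u : ℝ → ℝ → ℝ)
    (h_def : h = fun t _r => h0 / (c0 + w0 * t) ^ 2)
    (u_def : u = fun t r => w0 * r / (c0 + w0 * t))
    (hdot : ℝ → ℝ → ℝ)
    (hdot_def : hdot = fun t r => pT2 h t r + u t r * pR2 h t r)
    (hddot : ℝ → ℝ → ℝ)
    (hddot_def : hddot = fun t r => pT2 hdot t r + u t r * pR2 hdot t r)
    (p : ℝ → ℝ → ℝ)
    (p_def : p = fun t r => g * (h t r) ^ 2 / 2 + (h t r) ^ 2 / 3 * hddot t r) :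
    ∀ t : ℝ, 0 < c0 + w0 * t → ∀ r : ℝ, 0 ≤ r →
      (pT2 (fun t r => r * h t r) t r + pR2 (fun t r => r * h t r * u t r) t r = 0) ∧
      (h t r * (pT2 u t r + u t r * pR2 u t r) + pR2 p t r = 0) ∧
      pR2 p t r = 0 := by
  intro t ht r _
  have affine_deriv (s : ℝ) : HasDerivAt (fun s => c0 + w0 * s) w0 s :=
    (hasDerivAt_const_mul w0).const_add c0
  have affine_ne : ∀ᶠ s in 𝓝 t, c0 + w0 * s ≠ 0 :=
    (affine_deriv t).continuousAt.eventually_ne ht.ne'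
  have u_dilation : u = fun t r => w0 / (c0 + w0 * t) * r := by
    simp only [u_def, mul_div_right_comm]
  exact sgn_radial_exact_solution_general (fun x _ z => g * x ^ 2 / 2 + x ^ 2 / 3 * z)
    h_def u_dilation hdot_def hddot_def p_def
    (affine_ne.mono fun s hs => hasDerivAt_const_div_sq h0 (affine_deriv s) hs)
    (affine_ne.mono fun s hs => hasDerivAt_slope_div (affine_deriv s) hs) r
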